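/- arXiv:1504.03209 — 5 statements merged into one kernel-verified Lean document; each statement's English description precedes it below -/
import Mathlib

section
/- Let ν be a finite nonnegative Borel measure on ℝ such that for every a ∈ ℝ the function z ↦ e^{a z} is ν-integrable, and let C₀ ∈ ℝ. Define h : (0,∞)×ℝ → ℝ by h(t,x) = ∫_ℝ f(z,t,x) ν(dz) + C₀, where f(z,t,x) = (e^{z x − z² t/2} − 1)/z for z ≠ 0 and f(0,t,x) = x. Then h admits continuous partial derivatives ∂_t h, ∂_x h, ∂_{xx} h on (0,∞)×ℝ; h satisfies the backward heat equation ∂_t h(t,x) + (1/2) ∂_{xx} h(t,x) = 0; ∂_x h(t,x) = ∫_ℝ e^{z x − z² t/2} ν(dz) ≥ 0; and if ν is not the zero measure then ∂_x h(t,x) > 0, so x ↦ h(t,x) is strictly increasing. -/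
/-!
Write `E z t x = exp (z x - z² t / 2)` for the heat kernel exponential. For `t ≥ 0` and `|x| ≤ R`
the Gaussian factor is at most `1`, so `E ≤ exp (R |z|)` and `|z| E ≤ exp ((R + 1) |z|)`, and
these bounds are `ν`-integrable because `ν` has all exponential moments
(`integrable_exp_abs`). The integrand `f` has `∂ₓ f = E`, `∂ₓₓ f = z E` and `∂ₜ f = -z E / 2`, at
`z = 0` included, so dominated convergence gives differentiation under the integral sign and
continuity of `∫ E dν` and `∫ z E dν` in `(t, x)`. The heat equation is the pointwise identity
`∂ₜ f + ∂ₓₓ f / 2 = 0` integrated, and positivity of `∂ₓ h` is positivity of `E`.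
-/


open Real MeasureTheory Set

noncomputable section

/-- Partial derivative in the first (time) variable of a two-argument function. -/
def pdT (f : ℝ → ℝ → ℝ) (t x : ℝ) : ℝ := deriv (fun s => f s x) t

/-- Partial derivative in the second (space) variable of a two-argument function. -/
def pdX (f : ℝ → ℝ → ℝ) : ℝ → ℝ → ℝ := fun t x => deriv (f t) x

/-- The exponential factor `E z t x = exp (z x - z² t / 2)`, a space-time solution of the backward
heat equation for each fixed `z`. -/
def heatExp (z t x : ℝ) : ℝ := Real.exp (z * x - z ^ 2 * t / 2)

/-- The integrand of `h`, extended by the value `x` at `z = 0`. -/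
def widderKernel (z t x : ℝ) : ℝ :=
  if z = 0 then x else (Real.exp (z * x - z ^ 2 * t / 2) - 1) / z

lemma heatExp_pos (z t x : ℝ) : 0 < heatExp z t x := Real.exp_pos _

lemma heatExp_le {z t x R : ℝ} (ht : 0 ≤ t) (hx : |x| ≤ R) :
    heatExp z t x ≤ Real.exp (R * |z|) := by
  refine Real.exp_le_exp.2 ?_
  have h1 : z * x ≤ |z| * |x| := by rw [← abs_mul]; exact le_abs_self _
  have h2 : |z| * |x| ≤ |z| * R := mul_le_mul_of_nonneg_left hx (abs_nonneg z)
  have h3 : 0 ≤ z ^ 2 * t / 2 := by positivity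
  linarith

lemma abs_mul_heatExp_le {z t x R : ℝ} (ht : 0 ≤ t) (hx : |x| ≤ R) :
    |z * heatExp z t x| ≤ Real.exp ((R + 1) * |z|) := by
  have h1 : |z| ≤ Real.exp |z| := by linarith [Real.add_one_le_exp |z|]
  rw [abs_mul, abs_of_pos (heatExp_pos z t x), add_mul, one_mul, Real.exp_add, mul_comm]
  exact mul_le_mul (heatExp_le ht hx) h1 (abs_nonneg z) (Real.exp_pos _).le

/-- Mean value bound for `exp`, with the factor `|u|` that cancels the division by `z` in the
kernel. No Gaussian decay is needed: `exp u` itself is later bounded by `exp (|x| |z|)`. -/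
lemma abs_exp_sub_one_le_mul_one_add_exp (u : ℝ) : |Real.exp u - 1| ≤ |u| * (1 + Real.exp u) := by
  have h1 := Real.add_one_le_exp u
  have h2 : Real.exp u - 1 ≤ u * Real.exp u := by
    have h3 := mul_le_mul_of_nonneg_right (Real.add_one_le_exp (-u)) (Real.exp_pos u).le
    rw [← Real.exp_add, neg_add_cancel, Real.exp_zero] at h3
    linarith
  have h4 : u * Real.exp u ≤ |u| * Real.exp u :=
    mul_le_mul_of_nonneg_right (le_abs_self u) (Real.exp_pos u).le
  have h5 : 0 ≤ |u| * Real.exp u := by positivity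
  have h6 := neg_abs_le u
  have h7 := abs_nonneg u
  rw [abs_le]
  constructor <;> linarith

/-- The removable singularity at `z = 0` leaves a factor linear in `z` times an exponential,
which gives an integrable majorant. -/
lemma abs_widderKernel_le {z t x : ℝ} (ht : 0 ≤ t) :
    |widderKernel z t x| ≤ (|x| + t) * 2 * Real.exp ((|x| + 1) * |z|) := by
  have hz1 : |z| ≤ Real.exp |z| := by linarith [Real.add_one_le_exp |z|]
  have hz2 : 1 ≤ Real.exp |z| := Real.one_le_exp (abs_nonneg z)
  have hE : heatExp z t x ≤ Real.exp (|x| * |z|) := heatExp_le ht le_rfl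
  have hE1 : 1 ≤ Real.exp (|x| * |z|) := Real.one_le_exp (by positivity)
  have hsplit : Real.exp ((|x| + 1) * |z|) = Real.exp (|x| * |z|) * Real.exp |z| := by
    rw [← Real.exp_add]; ring_nf
  have hx := abs_nonneg x
  -- the linear factor `|x| + |z| t` left after dividing by `z` is absorbed by `exp |z|`
  have hlin : |x| + |z| * t ≤ (|x| + t) * Real.exp |z| := by
    have h1 : |x| * 1 ≤ |x| * Real.exp |z| := mul_le_mul_of_nonneg_left hz2 hx
    have h2 : |z| * t ≤ Real.exp |z| * t := mul_le_mul_of_nonneg_right hz1 ht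
    linarith
  have hmain : |widderKernel z t x| ≤ (|x| + |z| * t) * (1 + heatExp z t x) := by
    have hEp := heatExp_pos z t x
    unfold widderKernel
    split_ifs with hz
    · have : 0 ≤ |x| * heatExp z t x := by positivity
      subst hz
      simp only [abs_zero, zero_mul, add_zero]
      linarith
    · have hzp : 0 < |z| := abs_pos.2 hz
      rw [abs_div, div_le_iff₀ hzp]
      refine (abs_exp_sub_one_le_mul_one_add_exp _).trans ?_
      have hu : |z * x - z ^ 2 * t / 2| ≤ (|x| + |z| * t) * |z| := by
        have h1 := abs_sub (z * x) (z ^ 2 * t / 2)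
        rw [abs_mul, abs_of_nonneg (show 0 ≤ z ^ 2 * t / 2 by positivity)] at h1
        have h2 : 0 ≤ |z| ^ 2 * t := by positivity
        have h3 := sq_abs z
        rw [← h3] at h1 ⊢
        nlinarith
      calc _ ≤ ((|x| + |z| * t) * |z|) * (1 + heatExp z t x) :=
            mul_le_mul_of_nonneg_right hu (by positivity)
        _ = _ := by ring
  calc _ ≤ (|x| + |z| * t) * (1 + heatExp z t x) := hmain
    _ ≤ ((|x| + t) * Real.exp |z|) * (2 * Real.exp (|x| * |z|)) :=
        mul_le_mul hlin (by linarith) (by linarith [heatExp_pos z t x]) (by positivity)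
    _ = _ := by rw [hsplit]; ring

/-- Exponential moments of `|z|`, which dominate every integrand below, from
`exp (R |z|) ≤ exp (R z) + exp (-R z)`. -/
lemma integrable_exp_abs {ν : Measure ℝ}
    (hint : ∀ a : ℝ, Integrable (fun z => Real.exp (a * z)) ν) (R : ℝ) :
    Integrable (fun z => Real.exp (R * |z|)) ν := by
  refine ((hint R).add (hint (-R))).mono' (by fun_prop) (ae_of_all _ fun z => ?_)
  have h1 := Real.exp_pos (R * z)
  have h2 := Real.exp_pos (-R * z)
  rw [Real.norm_of_nonneg (Real.exp_pos _).le, Pi.add_apply]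
  rcases abs_cases z with ⟨h, -⟩ | ⟨h, -⟩ <;> rw [h]
  · linarith
  · rw [mul_neg, ← neg_mul]; linarith

lemma measurable_widderKernel (t x : ℝ) : Measurable fun z => widderKernel z t x := by
  unfold widderKernel
  exact Measurable.ite (measurableSet_singleton 0) (by fun_prop) (by fun_prop)

lemma continuous_heatExp (t x : ℝ) : Continuous fun z => heatExp z t x := by
  unfold heatExp; fun_prop

lemma integrable_widderKernel {ν : Measure ℝ}
    (hint : ∀ a : ℝ, Integrable (fun z => Real.exp (a * z)) ν) {t : ℝ} (ht : 0 ≤ t) (x : ℝ) :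
    Integrable (fun z => widderKernel z t x) ν :=
  ((integrable_exp_abs hint (|x| + 1)).const_mul ((|x| + t) * 2)).mono'
    (measurable_widderKernel t x).aestronglyMeasurable (ae_of_all _ fun _ => abs_widderKernel_le ht)

lemma integrable_heatExp {ν : Measure ℝ}
    (hint : ∀ a : ℝ, Integrable (fun z => Real.exp (a * z)) ν) {t : ℝ} (ht : 0 ≤ t) (x : ℝ) :
    Integrable (fun z => heatExp z t x) ν :=
  (integrable_exp_abs hint |x|).mono' (continuous_heatExp t x).aestronglyMeasurable
    (ae_of_all _ fun z => by
      rw [Real.norm_of_nonneg (heatExp_pos z t x).le]; exact heatExp_le ht le_rfl)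

lemma hasDerivAt_heatExp_x (z t x : ℝ) :
    HasDerivAt (fun y => heatExp z t y) (z * heatExp z t x) x := by
  have h : HasDerivAt (fun y : ℝ => z * y - z ^ 2 * t / 2) z x := by
    simpa using ((hasDerivAt_id x).const_mul z).sub_const (z ^ 2 * t / 2)
  rw [mul_comm]
  exact h.exp

lemma hasDerivAt_heatExp_t (z t x : ℝ) :
    HasDerivAt (fun s => heatExp z s x) (-(z ^ 2 / 2) * heatExp z t x) t := by
  have h : HasDerivAt (fun s : ℝ => z * x - z ^ 2 * s / 2) (-(z ^ 2 / 2)) t := by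
    simpa using (((hasDerivAt_id t).const_mul (z ^ 2)).div_const 2).const_sub (z * x)
  rw [mul_comm]
  exact h.exp

lemma hasDerivAt_widderKernel_x (z t x : ℝ) :
    HasDerivAt (fun y => widderKernel z t y) (heatExp z t x) x := by
  by_cases hz : z = 0
  · subst hz
    simpa [widderKernel, heatExp] using hasDerivAt_id' x
  · have h := ((hasDerivAt_heatExp_x z t x).sub_const 1).div_const z
    rw [mul_div_cancel_left₀ _ hz] at h
    simpa only [widderKernel, if_neg hz, heatExp] using h

/-- The factor `1 / z` cancels against `∂ₜ E = -z² E / 2`, so the formula also holds at `z = 0`,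
where the kernel does not depend on time. -/
lemma hasDerivAt_widderKernel_t (z t x : ℝ) :
    HasDerivAt (fun s => widderKernel z s x) (-(1 / 2) * (z * heatExp z t x)) t := by
  by_cases hz : z = 0
  · subst hz
    simpa [widderKernel] using hasDerivAt_const t x
  · have h := ((hasDerivAt_heatExp_t z t x).sub_const 1).div_const z
    have e : -(z ^ 2 / 2) * heatExp z t x / z = -(1 / 2) * (z * heatExp z t x) := by
      field_simp
    rw [e] at h
    simpa only [widderKernel, if_neg hz, heatExp] using h

lemma abs_le_of_mem_ball {x y : ℝ} (h : y ∈ Metric.ball x 1) : |y| ≤ |x| + 1 := by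
  rw [Metric.mem_ball, Real.dist_eq] at h
  have := abs_sub_abs_le_abs_sub y x
  linarith

lemma hasDerivAt_integral_widderKernel_x {ν : Measure ℝ}
    (hint : ∀ a : ℝ, Integrable (fun z => Real.exp (a * z)) ν) {t : ℝ} (ht : 0 ≤ t) (x : ℝ) :
    HasDerivAt (fun y => ∫ z, widderKernel z t y ∂ν) (∫ z, heatExp z t x ∂ν) x :=
  (hasDerivAt_integral_of_dominated_loc_of_deriv_le (F := fun y z => widderKernel z t y)
    (F' := fun y z => heatExp z t y) (Metric.ball_mem_nhds x one_pos)
    (.of_forall fun y => (measurable_widderKernel t y).aestronglyMeasurable)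
    (integrable_widderKernel hint ht x) (continuous_heatExp t x).aestronglyMeasurable
    (ae_of_all _ fun z y hy => by
      rw [Real.norm_of_nonneg (heatExp_pos z t y).le]
      exact heatExp_le ht (abs_le_of_mem_ball hy))
    (integrable_exp_abs hint (|x| + 1))
    (ae_of_all _ fun z y _ => hasDerivAt_widderKernel_x z t y)).2

lemma hasDerivAt_integral_heatExp_x {ν : Measure ℝ}
    (hint : ∀ a : ℝ, Integrable (fun z => Real.exp (a * z)) ν) {t : ℝ} (ht : 0 ≤ t) (x : ℝ) :
    HasDerivAt (fun y => ∫ z, heatExp z t y ∂ν) (∫ z, z * heatExp z t x ∂ν) x :=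
  (hasDerivAt_integral_of_dominated_loc_of_deriv_le (F := fun y z => heatExp z t y)
    (F' := fun y z => z * heatExp z t y) (Metric.ball_mem_nhds x one_pos)
    (.of_forall fun y => (continuous_heatExp t y).aestronglyMeasurable)
    (integrable_heatExp hint ht x) (continuous_id.mul (continuous_heatExp t x)).aestronglyMeasurable
    (ae_of_all _ fun _ _ hy => abs_mul_heatExp_le ht (abs_le_of_mem_ball hy))
    (integrable_exp_abs hint (|x| + 1 + 1))
    (ae_of_all _ fun z y _ => hasDerivAt_heatExp_x z t y)).2

lemma hasDerivAt_integral_widderKernel_t {ν : Measure ℝ}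
    (hint : ∀ a : ℝ, Integrable (fun z => Real.exp (a * z)) ν) {t : ℝ} (ht : 0 < t) (x : ℝ) :
    HasDerivAt (fun s => ∫ z, widderKernel z s x ∂ν)
      (-(1 / 2) * ∫ z, z * heatExp z t x ∂ν) t := by
  rw [← integral_const_mul]
  refine (hasDerivAt_integral_of_dominated_loc_of_deriv_le (F := fun s z => widderKernel z s x)
    (F' := fun s z => -(1 / 2) * (z * heatExp z s x)) (Ioi_mem_nhds ht)
    (.of_forall fun s => (measurable_widderKernel s x).aestronglyMeasurable)
    (integrable_widderKernel hint ht.le x)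
    (continuous_const.mul (continuous_id.mul (continuous_heatExp t x))).aestronglyMeasurable
    (ae_of_all _ fun z s hs => ?_)
    (integrable_exp_abs hint (|x| + 1))
    (ae_of_all _ fun z s _ => hasDerivAt_widderKernel_t z s x)).2
  have h := abs_mul_heatExp_le (z := z) (le_of_lt hs) (le_refl |x|)
  rw [norm_mul, Real.norm_eq_abs (z * _)]
  have h2 : ‖(-(1 / 2) : ℝ)‖ = 1 / 2 := by norm_num
  rw [h2]
  linarith [abs_nonneg (z * heatExp z s x)]

/-- Near a point with `t > 0`, the time stays positive and `x` stays bounded. -/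
lemma eventually_pos_abs_le {p : ℝ × ℝ} (hp : 0 < p.1) :
    ∀ᶠ q : ℝ × ℝ in nhds p, 0 ≤ q.1 ∧ |q.2| ≤ |p.2| + 1 := by
  have h1 : ∀ᶠ q : ℝ × ℝ in nhds p, 0 < q.1 := continuousAt_fst.eventually (lt_mem_nhds hp)
  have h2 : ∀ᶠ q : ℝ × ℝ in nhds p, q.2 ∈ Metric.ball p.2 1 :=
    continuousAt_snd.eventually (Metric.ball_mem_nhds _ one_pos)
  filter_upwards [h1, h2] with q hq1 hq2
  exact ⟨hq1.le, abs_le_of_mem_ball hq2⟩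

lemma continuousAt_integral_heatExp {ν : Measure ℝ}
    (hint : ∀ a : ℝ, Integrable (fun z => Real.exp (a * z)) ν) {p : ℝ × ℝ} (hp : 0 < p.1) :
    ContinuousAt (fun q : ℝ × ℝ => ∫ z, heatExp z q.1 q.2 ∂ν) p := by
  refine continuousAt_of_dominated
    (.of_forall fun q => (continuous_heatExp q.1 q.2).aestronglyMeasurable)
    ?_ (integrable_exp_abs hint (|p.2| + 1)) (ae_of_all _ fun z => ?_)
  · filter_upwards [eventually_pos_abs_le hp] with q hq
    refine ae_of_all _ fun z => ?_
    rw [Real.norm_of_nonneg (heatExp_pos z _ _).le]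
    exact heatExp_le hq.1 hq.2
  · unfold heatExp; fun_prop

lemma continuousAt_integral_mul_heatExp {ν : Measure ℝ}
    (hint : ∀ a : ℝ, Integrable (fun z => Real.exp (a * z)) ν) {p : ℝ × ℝ} (hp : 0 < p.1) :
    ContinuousAt (fun q : ℝ × ℝ => ∫ z, z * heatExp z q.1 q.2 ∂ν) p := by
  refine continuousAt_of_dominated
    (.of_forall fun q =>
      (continuous_id.mul (continuous_heatExp q.1 q.2)).aestronglyMeasurable)
    ?_ (integrable_exp_abs hint (|p.2| + 1 + 1)) (ae_of_all _ fun z => ?_)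
  · filter_upwards [eventually_pos_abs_le hp] with q hq
    exact ae_of_all _ fun z => abs_mul_heatExp_le hq.1 hq.2
  · unfold heatExp; fun_prop

theorem statement1 (ν : Measure ℝ) [IsFiniteMeasure ν]
    (hint : ∀ a : ℝ, Integrable (fun z => Real.exp (a * z)) ν)
    (C₀ : ℝ) (f : ℝ → ℝ → ℝ → ℝ)
    (hf : ∀ z t x : ℝ,
      f z t x = if z = 0 then x else (Real.exp (z * x - z ^ 2 * t / 2) - 1) / z)
    (h : ℝ → ℝ → ℝ)
    (hh : ∀ t x : ℝ, h t x = (∫ z, f z t x ∂ν) + C₀) :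
    -- existence of the partial derivatives ∂ₜh, ∂ₓh, ∂ₓₓh on (0,∞)×ℝ
    ((∀ t x : ℝ, 0 < t →
        DifferentiableAt ℝ (fun s => h s x) t ∧
        DifferentiableAt ℝ (h t) x ∧
        DifferentiableAt ℝ (deriv (h t)) x) ∧
      -- continuity of the partial derivatives on (0,∞)×ℝ
      ContinuousOn (fun p : ℝ × ℝ => pdT h p.1 p.2) (Ioi 0 ×ˢ univ) ∧
      ContinuousOn (fun p : ℝ × ℝ => pdX h p.1 p.2) (Ioi 0 ×ˢ univ) ∧
      ContinuousOn (fun p : ℝ × ℝ => pdX (pdX h) p.1 p.2) (Ioi 0 ×ˢ univ)) ∧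
    -- backward heat equation
    (∀ t x : ℝ, 0 < t → pdT h t x + (1 / 2) * pdX (pdX h) t x = 0) ∧
    -- formula and nonnegativity for ∂ₓh
    (∀ t x : ℝ, 0 < t →
      pdX h t x = (∫ z, Real.exp (z * x - z ^ 2 * t / 2) ∂ν) ∧ 0 ≤ pdX h t x) ∧
    -- strict positivity and strict monotonicity when ν ≠ 0
    (ν ≠ 0 → ∀ t : ℝ, 0 < t → (∀ x : ℝ, 0 < pdX h t x) ∧ StrictMono (h t)) := by
  have hh' : h = fun t x => (∫ z, widderKernel z t x ∂ν) + C₀ := by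
    funext t x
    simp only [hh, hf, widderKernel]
  have hX : ∀ t x : ℝ, 0 < t → HasDerivAt (h t) (∫ z, heatExp z t x ∂ν) x := fun t x ht => by
    rw [hh']
    exact (hasDerivAt_integral_widderKernel_x hint ht.le x).add_const C₀
  have hT : ∀ t x : ℝ, 0 < t →
      HasDerivAt (fun s => h s x) (-(1 / 2) * ∫ z, z * heatExp z t x ∂ν) t := fun t x ht => by
    rw [hh']
    exact (hasDerivAt_integral_widderKernel_t hint ht x).add_const C₀
  have hdX : ∀ t : ℝ, 0 < t → deriv (h t) = fun x => ∫ z, heatExp z t x ∂ν := fun t ht =>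
    funext fun x => (hX t x ht).deriv
  have hXX : ∀ t x : ℝ, 0 < t →
      HasDerivAt (deriv (h t)) (∫ z, z * heatExp z t x ∂ν) x := fun t x ht => by
    rw [hdX t ht]
    exact hasDerivAt_integral_heatExp_x hint ht.le x
  have eT : ∀ t x : ℝ, 0 < t → pdT h t x = -(1 / 2) * ∫ z, z * heatExp z t x ∂ν :=
    fun t x ht => (hT t x ht).deriv
  have eX : ∀ t x : ℝ, 0 < t → pdX h t x = ∫ z, heatExp z t x ∂ν :=
    fun t x ht => (hX t x ht).deriv
  have eXX : ∀ t x : ℝ, 0 < t → pdX (pdX h) t x = ∫ z, z * heatExp z t x ∂ν :=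
    fun t x ht => (hXX t x ht).deriv
  refine ⟨⟨fun t x ht => ⟨(hT t x ht).differentiableAt, (hX t x ht).differentiableAt,
    (hXX t x ht).differentiableAt⟩, ?_, ?_, ?_⟩, ?_, ?_, ?_⟩
  · refine ContinuousOn.congr (fun p hp => ?_) fun p hp => eT p.1 p.2 hp.1
    exact ((continuousAt_integral_mul_heatExp hint hp.1).const_mul _).continuousWithinAt
  · refine ContinuousOn.congr (fun p hp => ?_) fun p hp => eX p.1 p.2 hp.1
    exact (continuousAt_integral_heatExp hint hp.1).continuousWithinAt
  · refine ContinuousOn.congr (fun p hp => ?_) fun p hp => eXX p.1 p.2 hp.1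
    exact (continuousAt_integral_mul_heatExp hint hp.1).continuousWithinAt
  · intro t x ht
    rw [eT t x ht, eXX t x ht]
    ring
  · intro t x ht
    rw [eX t x ht]
    exact ⟨rfl, integral_nonneg fun z => (heatExp_pos z t x).le⟩
  · intro hν t ht
    have : NeZero ν := ⟨hν⟩
    have hpos : ∀ x : ℝ, 0 < ∫ z, heatExp z t x ∂ν := fun x =>
      integral_exp_pos (integrable_heatExp hint ht.le x)
    exact ⟨fun x => by rw [eX t x ht]; exact hpos x,
      strictMono_of_deriv_pos fun x => by rw [(hX t x ht).deriv]; exact hpos x⟩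
end
end

section
/- Let c > 0 and let V : [0,∞)×(0,∞) → ℝ have continuous partial derivatives ∂_t V, ∂_x V, ∂_{xx} V, ∂_{xxx} V and ∂_t∂_x V, with ∂_x V(t,x) > 0 and ∂_{xx} V(t,x) < 0 for all t, x, and suppose V satisfies ∂_t V = (c/2)(∂_x V)²/∂_{xx} V. Define ξ(t,x) := −log ∂_x V(t,x) − (c/2) t. Suppose w : [0,∞)×ℝ → ℝ has continuous partial derivatives ∂_t w, ∂_ξ w, ∂_{ξξ} w and satisfies w(t, ξ(t,x)) = V(t,x) for all t ≥ 0, x > 0. Then for all t ≥ 0, x > 0: ∂_t w(t, ξ(t,x)) + (c/2) ∂_{ξξ} w(t, ξ(t,x)) = 0; that is, in the new coordinates the fully nonlinear equation becomes the backward heat equation. -/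
open Real Set

noncomputable section

/-!
Write `p = V_x`, `q = V_xx`, so `ξ_x = -q / p`. Differentiating `w(t, ξ(t,x)) = V(t,x)` in `x` gives
`w_ξ(t, ξ) = -p² / q`, and the equation for `V` becomes `V_t = -(c/2) w_ξ(t, ξ)`. Differentiating
this in `x` yields `∂_x V_t = (c/2) w_ξξ q / p`, while differentiating the first identity in `t`,
with `ξ_t = -∂_t V_x / p - c/2`, yields `w_t = w_ξ ∂_t V_x / p`. If the mixed derivatives agree, then
`w_t = (c/2) w_ξ w_ξξ q / p² = -(c/2) w_ξξ`.

The mixed derivatives agree by Schwarz's theorem (`mixed_partials_eq`): `∂_x V_t` exists and is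
continuous because `V_t = (c/2) p² / q`. Since `t = 0` is allowed and nothing is known for `t < 0`,
both Schwarz's theorem and the chain rule in time (`hasDerivWithinAt_along_curve`) are proved from
the right, by the mean value theorem.
-/

open Filter Topology

/-- A second difference over a square equals the mixed derivative at an interior point, by two
applications of the mean value theorem. -/
lemma exists_mixed_eq_second_difference {f a A : ℝ → ℝ → ℝ} {t x h : ℝ} (hh : 0 < h)
    (ha : ∀ s ∈ Icc t (t + h), ∀ y ∈ Icc x (x + h), HasDerivAt (fun r => f r y) (a s y) s)
    (hA : ∀ s ∈ Icc t (t + h), ∀ y ∈ Icc x (x + h), HasDerivAt (a s) (A s y) y) :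
    ∃ s ∈ Ioo t (t + h), ∃ y ∈ Ioo x (x + h),
      A s y * h * h = f (t + h) (x + h) - f (t + h) x - f t (x + h) + f t x := by
  have hxl : x ∈ Icc x (x + h) := ⟨le_rfl, by linarith⟩
  have hxr : x + h ∈ Icc x (x + h) := ⟨by linarith, le_rfl⟩
  have hg : ∀ s ∈ Icc t (t + h),
      HasDerivAt (fun r => f r (x + h) - f r x) (a s (x + h) - a s x) s :=
    fun s hs => (ha s hs _ hxr).sub (ha s hs _ hxl)
  obtain ⟨s, hs, hse⟩ := exists_hasDerivAt_eq_slope (fun r => f r (x + h) - f r x)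
    (fun s => a s (x + h) - a s x) (by linarith : t < t + h)
    (fun s hs => (hg s hs).continuousAt.continuousWithinAt)
    (fun s hs => hg s (Ioo_subset_Icc_self hs))
  have hs' := Ioo_subset_Icc_self hs
  obtain ⟨y, hy, hye⟩ := exists_hasDerivAt_eq_slope (a s) (A s) (by linarith : x < x + h)
    (fun y hy => (hA s hs' y hy).continuousAt.continuousWithinAt)
    (fun y hy => hA s hs' y (Ioo_subset_Icc_self hy))
  refine ⟨s, hs, y, hy, ?_⟩
  rw [add_sub_cancel_left, eq_div_iff hh.ne'] at hse hye
  rw [hye, hse]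
  ring

/-- Schwarz's theorem on `[0,∞) × (0,∞)`, valid up to the boundary `t = 0`. -/
lemma mixed_partials_eq {f a b A B : ℝ → ℝ → ℝ}
    (ha : ∀ t x, 0 ≤ t → 0 < x → HasDerivAt (fun s => f s x) (a t x) t)
    (hA : ∀ t x, 0 ≤ t → 0 < x → HasDerivAt (a t) (A t x) x)
    (hb : ∀ t x, 0 ≤ t → 0 < x → HasDerivAt (f t) (b t x) x)
    (hB : ∀ t x, 0 ≤ t → 0 < x → HasDerivAt (fun s => b s x) (B t x) t)
    (hAc : ContinuousOn (fun p : ℝ × ℝ => A p.1 p.2) (Ici 0 ×ˢ Ioi 0))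
    (hBc : ContinuousOn (fun p : ℝ × ℝ => B p.1 p.2) (Ici 0 ×ˢ Ioi 0))
    {t x : ℝ} (ht : 0 ≤ t) (hx : 0 < x) : A t x = B t x := by
  have key : ∀ h : ℝ, 0 < h → ∃ P Q : ℝ × ℝ,
      P ∈ Icc t (t + h) ×ˢ Icc x (x + h) ∧ Q ∈ Icc t (t + h) ×ˢ Icc x (x + h) ∧
        A P.1 P.2 = B Q.1 Q.2 := by
    intro h hh
    obtain ⟨s, hs, y, hy, e⟩ := exists_mixed_eq_second_difference (f := f) (a := a) (A := A) hh
      (fun s hs y hy => ha s y (ht.trans hs.1) (hx.trans_le hy.1))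
      (fun s hs y hy => hA s y (ht.trans hs.1) (hx.trans_le hy.1))
    obtain ⟨y', hy', s', hs', e'⟩ := exists_mixed_eq_second_difference
      (f := fun y s => f s y) (a := fun y s => b s y) (A := fun y s => B s y) hh
      (fun y hy s hs => hb s y (ht.trans hs.1) (hx.trans_le hy.1))
      (fun y hy s hs => hB s y (ht.trans hs.1) (hx.trans_le hy.1))
    refine ⟨(s, y), (s', y'), ⟨Ioo_subset_Icc_self hs, Ioo_subset_Icc_self hy⟩,
      ⟨Ioo_subset_Icc_self hs', Ioo_subset_Icc_self hy'⟩, ?_⟩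
    apply mul_right_cancel₀ hh.ne'
    apply mul_right_cancel₀ hh.ne'
    change A s y * h * h = B s' y' * h * h
    linarith
  have hmem : ((t, x) : ℝ × ℝ) ∈ Ici (0 : ℝ) ×ˢ Ioi (0 : ℝ) := ⟨ht, hx⟩
  by_contra hne
  have hε : 0 < dist (A t x) (B t x) / 2 := by
    have := dist_pos.2 hne
    positivity
  obtain ⟨d₁, hd₁, H₁⟩ := Metric.continuousWithinAt_iff.1 (hAc _ hmem) _ hε
  obtain ⟨d₂, hd₂, H₂⟩ := Metric.continuousWithinAt_iff.1 (hBc _ hmem) _ hε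
  have hd : 0 < min d₁ d₂ := lt_min hd₁ hd₂
  obtain ⟨P, Q, hP, hQ, e⟩ := key (min d₁ d₂ / 2) (by positivity)
  have near : ∀ R : ℝ × ℝ,
      R ∈ Icc t (t + min d₁ d₂ / 2) ×ˢ Icc x (x + min d₁ d₂ / 2) →
        R ∈ Ici (0 : ℝ) ×ˢ Ioi (0 : ℝ) ∧ dist R (t, x) < min d₁ d₂ := by
    rintro ⟨s, y⟩ ⟨⟨h1, h2⟩, ⟨h3, h4⟩⟩
    dsimp only at h1 h2 h3 h4
    refine ⟨⟨ht.trans h1, hx.trans_le h3⟩, ?_⟩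
    rw [Prod.dist_eq, Real.dist_eq, Real.dist_eq]
    refine max_lt ?_ ?_ <;> rw [abs_lt] <;> constructor <;> dsimp only <;> linarith
  have hPA := H₁ (near P hP).1 ((near P hP).2.trans_le (min_le_left _ _))
  have hQB := H₂ (near Q hQ).1 ((near Q hQ).2.trans_le (min_le_right _ _))
  dsimp only at hPA hQB
  rw [← e] at hQB
  have := dist_triangle_left (A t x) (B t x) (A P.1 P.2)
  linarith

/-- The mean value theorem without an ordering assumption on the endpoints. -/
lemma exists_mem_uIcc_sub_eq_deriv_mul {g : ℝ → ℝ} (hg : Differentiable ℝ g) (u v : ℝ) :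
    ∃ z ∈ uIcc u v, g v - g u = deriv g z * (v - u) := by
  rcases lt_trichotomy u v with h | h | h
  · obtain ⟨z, hz, e⟩ := exists_deriv_eq_slope g h hg.continuous.continuousOn hg.differentiableOn
    refine ⟨z, Icc_subset_uIcc (Ioo_subset_Icc_self hz), ?_⟩
    rw [e, div_mul_cancel₀ _ (sub_pos.2 h).ne']
  · subst h
    exact ⟨u, left_mem_uIcc, by simp⟩
  · obtain ⟨z, hz, e⟩ := exists_deriv_eq_slope g h hg.continuous.continuousOn hg.differentiableOn
    refine ⟨z, Icc_subset_uIcc' (Ioo_subset_Icc_self hz), ?_⟩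
    have := (sub_pos.2 h).ne'
    rw [e]
    field_simp
    ring

/-- The chain rule from the right along `s ↦ (s, y s)`, needing joint continuity of only the
spatial derivative. -/
lemma hasDerivWithinAt_along_curve {w : ℝ → ℝ → ℝ} {y : ℝ → ℝ} {t wt y' : ℝ} (ht : 0 ≤ t)
    (hd : ∀ s, 0 ≤ s → Differentiable ℝ (w s))
    (hc : ContinuousOn (fun p : ℝ × ℝ => deriv (w p.1) p.2) (Ici 0 ×ˢ univ))
    (hwt : HasDerivAt (fun s => w s (y t)) wt t) (hy : HasDerivAt y y' t) :
    HasDerivWithinAt (fun s => w s (y s)) (wt + deriv (w t) (y t) * y') (Ioi t) t := by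
  have hz : ∀ s, ∃ z, z ∈ uIcc (y t) (y s) ∧
      (0 ≤ s → w s (y s) - w s (y t) = deriv (w s) z * (y s - y t)) := by
    intro s
    by_cases hs : 0 ≤ s
    · obtain ⟨z, hz, e⟩ := exists_mem_uIcc_sub_eq_deriv_mul (hd s hs) (y t) (y s)
      exact ⟨z, hz, fun _ => e⟩
    · exact ⟨y t, left_mem_uIcc, fun h => absurd h hs⟩
  choose z hzm hze using hz
  have hyc : Tendsto y (𝓝[>] t) (𝓝 (y t)) := hy.continuousAt.continuousWithinAt
  have hzc : Tendsto z (𝓝[>] t) (𝓝 (y t)) := by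
    rw [tendsto_iff_dist_tendsto_zero] at hyc ⊢
    refine squeeze_zero (fun _ => dist_nonneg) (fun s => ?_) hyc
    rw [Real.dist_eq, Real.dist_eq]
    exact abs_sub_left_of_mem_uIcc (hzm s)
  have hpair : Tendsto (fun s => (s, z s)) (𝓝[>] t)
      (𝓝[Ici (0 : ℝ) ×ˢ (univ : Set ℝ)] (t, y t)) := by
    refine tendsto_nhdsWithin_iff.2 ⟨?_, ?_⟩
    · exact (tendsto_id.mono_left nhdsWithin_le_nhds).prodMk_nhds hzc
    · filter_upwards [self_mem_nhdsWithin] with s hs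
      exact ⟨ht.trans (le_of_lt hs), mem_univ _⟩
  have hD : Tendsto (fun s => deriv (w s) (z s)) (𝓝[>] t) (𝓝 (deriv (w t) (y t))) :=
    (hc (t, y t) ⟨ht, mem_univ _⟩).tendsto.comp hpair
  have h1 := (hasDerivWithinAt_iff_tendsto_slope' self_notMem_Ioi).1 (hwt.hasDerivWithinAt (s := Ioi t))
  have h2 := (hasDerivWithinAt_iff_tendsto_slope' self_notMem_Ioi).1 (hy.hasDerivWithinAt (s := Ioi t))
  rw [hasDerivWithinAt_iff_tendsto_slope' self_notMem_Ioi]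
  refine (h1.add (hD.mul h2)).congr' ?_
  filter_upwards [self_mem_nhdsWithin] with s hs
  have e := hze s (ht.trans (le_of_lt hs))
  simp only [slope_def_field]
  rw [← mul_div_assoc, ← e]
  ring

theorem statement3 (c : ℝ) (hc : 0 < c)
    (V : ℝ → ℝ → ℝ)
    -- existence of the partial derivatives ∂ₜV, ∂ₓV, ∂ₓₓV, ∂ₓₓₓV and ∂ₜ∂ₓV on [0,∞)×(0,∞)
    (hVdiff : ∀ t x : ℝ, 0 ≤ t → 0 < x →
      DifferentiableAt ℝ (fun s => V s x) t ∧
      DifferentiableAt ℝ (V t) x ∧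
      DifferentiableAt ℝ (deriv (V t)) x ∧
      DifferentiableAt ℝ (deriv (deriv (V t))) x ∧
      DifferentiableAt ℝ (fun s => deriv (V s) x) t)
    -- continuity of these partial derivatives on [0,∞)×(0,∞)
    (hVcont :
      ContinuousOn (fun p : ℝ × ℝ => pdT V p.1 p.2) (Ici 0 ×ˢ Ioi 0) ∧
      ContinuousOn (fun p : ℝ × ℝ => deriv (V p.1) p.2) (Ici 0 ×ˢ Ioi 0) ∧
      ContinuousOn (fun p : ℝ × ℝ => deriv (deriv (V p.1)) p.2) (Ici 0 ×ˢ Ioi 0) ∧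
      ContinuousOn (fun p : ℝ × ℝ => deriv (deriv (deriv (V p.1))) p.2) (Ici 0 ×ˢ Ioi 0) ∧
      ContinuousOn (fun p : ℝ × ℝ => deriv (fun s => deriv (V s) p.2) p.1) (Ici 0 ×ˢ Ioi 0))
    (hVx : ∀ t x : ℝ, 0 ≤ t → 0 < x → 0 < deriv (V t) x)
    (hVxx : ∀ t x : ℝ, 0 ≤ t → 0 < x → deriv (deriv (V t)) x < 0)
    (hVpde : ∀ t x : ℝ, 0 ≤ t → 0 < x →
      pdT V t x = (c / 2) * (deriv (V t) x) ^ 2 / deriv (deriv (V t)) x)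
    (ξ : ℝ → ℝ → ℝ)
    (hξ : ∀ t x : ℝ, ξ t x = -Real.log (deriv (V t) x) - (c / 2) * t)
    (w : ℝ → ℝ → ℝ)
    -- existence and continuity of the partial derivatives ∂ₜw, ∂_ξ w, ∂_{ξξ} w on [0,∞)×ℝ
    (hwdiff : ∀ t ζ : ℝ, 0 ≤ t →
      DifferentiableAt ℝ (fun s => w s ζ) t ∧
      DifferentiableAt ℝ (w t) ζ ∧
      DifferentiableAt ℝ (deriv (w t)) ζ)
    (hwcont :
      ContinuousOn (fun p : ℝ × ℝ => pdT w p.1 p.2) (Ici 0 ×ˢ univ) ∧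
      ContinuousOn (fun p : ℝ × ℝ => deriv (w p.1) p.2) (Ici 0 ×ˢ univ) ∧
      ContinuousOn (fun p : ℝ × ℝ => deriv (deriv (w p.1)) p.2) (Ici 0 ×ˢ univ))
    (hw : ∀ t x : ℝ, 0 ≤ t → 0 < x → w t (ξ t x) = V t x) :
    ∀ t x : ℝ, 0 ≤ t → 0 < x →
      pdT w t (ξ t x) + (c / 2) * deriv (deriv (w t)) (ξ t x) = 0 := by
  obtain ⟨-, hpc, hqc, hrc, hBc⟩ := hVcont
  have hξx : ∀ t x, 0 ≤ t → 0 < x →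
      HasDerivAt (ξ t) (-(deriv (deriv (V t)) x / deriv (V t) x)) x := by
    intro t x ht hx
    rw [show ξ t = fun y => -Real.log (deriv (V t) y) - (c / 2) * t from funext (hξ t)]
    exact ((hVdiff t x ht hx).2.2.1.hasDerivAt.log (hVx t x ht hx).ne').neg.sub_const _
  have hwξ : ∀ t x, 0 ≤ t → 0 < x →
      deriv (w t) (ξ t x) = -((deriv (V t) x) ^ 2 / deriv (deriv (V t)) x) := by
    intro t x ht hx
    have hchain := (hwdiff t (ξ t x) ht).2.1.hasDerivAt.comp x (hξx t x ht hx)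
    have hV : HasDerivAt (w t ∘ ξ t) (deriv (V t) x) x := by
      refine (hVdiff t x ht hx).2.1.hasDerivAt.congr_of_eventuallyEq ?_
      filter_upwards [Ioi_mem_nhds hx] with y hy using hw t y ht hy
    have e := hchain.unique hV
    have hp := (hVx t x ht hx).ne'
    have hq := (hVxx t x ht hx).ne
    field_simp at e ⊢
    linarith
  -- The quotient rule for `V_t = (c/2) V_x² / V_xx`, in a form whose continuity is visible.
  have hA : ∀ t x, 0 ≤ t → 0 < x → HasDerivAt (pdT V t)
      ((c / 2) * ((2 * deriv (V t) x * deriv (deriv (V t)) x * deriv (deriv (V t)) x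
        - (deriv (V t) x) ^ 2 * deriv (deriv (deriv (V t))) x) / (deriv (deriv (V t)) x) ^ 2)) x := by
    intro t x ht hx
    obtain ⟨-, -, h3, h4, -⟩ := hVdiff t x ht hx
    have h := ((h3.hasDerivAt.pow 2).div h4.hasDerivAt (hVxx t x ht hx).ne).const_mul (c / 2)
    refine HasDerivAt.congr_of_eventuallyEq (h.congr_deriv (by simp)) ?_
    filter_upwards [Ioi_mem_nhds hx] with y hy
    rw [hVpde t y ht hy, mul_div_assoc]
    rfl
  intro t x ht hx
  have hmixed := mixed_partials_eq (f := V) (a := pdT V) (b := fun t x => deriv (V t) x)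
    (B := fun t x => deriv (fun s => deriv (V s) x) t)
    (fun t x ht hx => (hVdiff t x ht hx).1.hasDerivAt) hA
    (fun t x ht hx => (hVdiff t x ht hx).2.1.hasDerivAt)
    (fun t x ht hx => (hVdiff t x ht hx).2.2.2.2.hasDerivAt)
    (continuousOn_const.mul (((((continuousOn_const.mul hpc).mul hqc).mul hqc).sub
      ((hpc.pow 2).mul hrc)).div (hqc.pow 2)
      (fun z hz => pow_ne_zero 2 (hVxx z.1 z.2 hz.1 hz.2).ne))) hBc ht hx
  have hVtx := hA t x ht hx
  rw [hmixed] at hVtx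
  -- The same derivative computed from `V_t = -(c/2) w_ξ(t, ξ)`.
  have hVtx' : HasDerivAt (pdT V t) (-(c / 2) * (deriv (deriv (w t)) (ξ t x) *
      -(deriv (deriv (V t)) x / deriv (V t) x))) x := by
    refine (((hwdiff t (ξ t x) ht).2.2.hasDerivAt.comp x (hξx t x ht hx)).const_mul
      (-(c / 2))).congr_of_eventuallyEq ?_
    filter_upwards [Ioi_mem_nhds hx] with y hy
    rw [Function.comp_apply, hwξ t y ht hy, hVpde t y ht hy]
    ring
  have e1 := hVtx.unique hVtx'
  have hξt : HasDerivAt (fun s => ξ s x)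
      (-(deriv (fun s => deriv (V s) x) t / deriv (V t) x) - c / 2) t := by
    rw [show (fun s => ξ s x) = fun s => -Real.log (deriv (V s) x) - (c / 2) * s from
      funext fun s => hξ s x]
    have h := ((hVdiff t x ht hx).2.2.2.2.hasDerivAt.log (hVx t x ht hx).ne').neg.sub
      ((hasDerivAt_id t).const_mul (c / 2))
    rw [mul_one] at h
    exact h
  have hcurve := hasDerivWithinAt_along_curve ht (fun s hs ζ => (hwdiff s ζ hs).2.1) hwcont.2.1
    (hwdiff t (ξ t x) ht).1.hasDerivAt hξt
  have hVt : HasDerivWithinAt (fun s => w s (ξ s x)) (pdT V t x) (Ioi t) t := by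
    refine (hVdiff t x ht hx).1.hasDerivAt.hasDerivWithinAt.congr (fun s hs => ?_) (hw t x ht hx)
    exact hw s x (ht.trans (le_of_lt hs)) hx
  have e2 := (uniqueDiffWithinAt_Ioi t).eq_deriv _ hcurve hVt
  rw [hVpde t x ht hx, hwξ t x ht hx, e1] at e2
  have hp := (hVx t x ht hx).ne'
  have hq := (hVxx t x ht hx).ne
  change deriv (fun s => w s (ξ t x)) t + _ = 0
  field_simp at e2
  apply mul_left_cancel₀ hq
  linarith
end
end

section
/- Let δ > 0, β > 0, m ∈ ℝ, p ∈ ℝ, r ∈ ℝ, and consider the quadratic P(a) := (δβ²/2) a² + p a + r. Assume the discriminant D := p² − 2 δ β² r is strictly positive, let a₋ < a₊ be the two real roots of P, assume a₊ > 0, and set Δ := √D, so that Δ = (δβ²/2)(a₊ − a₋). Then for every t ≥ 0 one has 1 − (a₋/a₊) e^{−Δt} > 0, and the functions A₁(t) := a₋ (1 − e^{−Δt}) / (1 − (a₋/a₊) e^{−Δt}) and A₂(t) := δ m ( a₋ t − (2/(δβ²)) log( (1 − (a₋/a₊) e^{−Δt}) / (1 − a₋/a₊) ) ) are well defined and continuously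 differentiable on [0,∞), satisfy A₁(0) = A₂(0) = 0, and solve A₁′(t) = (δβ²/2) A₁(t)² + p A₁(t) + r and A₂′(t) = δ m A₁(t) for all t ≥ 0. -/
open Real Set

noncomputable section

/-!
With `c = δβ²/2`, the roots factor the quadratic as `P a = c (a - a₋)(a - a₊)`, so
`p = -c (a₋ + a₊)`, `r = c a₋ a₊` and `D = (c (a₊ - a₋))²`. Put `k = a₋/a₊ < 1`. For `t ≥ 0` the
exponential lies in `(0, 1]`, so the denominator `1 - k e^{-Δt}` is positive whatever the sign
of `k`. The differential equations then follow by direct differentiation and the identity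
`Δ = c (a₊ - a₋)`. Regularity on `[0, ∞)` comes from the explicit formulas, being compositions of
smooth functions away from the zeros of the denominator.
-/

theorem statement15 (δ β m p r : ℝ) (hδ : 0 < δ) (hβ : 0 < β)
    (P : ℝ → ℝ) (hP : ∀ a : ℝ, P a = (δ * β ^ 2 / 2) * a ^ 2 + p * a + r)
    (D : ℝ) (hD : D = p ^ 2 - 2 * δ * β ^ 2 * r) (hDpos : 0 < D)
    (aMinus aPlus : ℝ) (hroots : aMinus < aPlus)
    (hPm : P aMinus = 0) (hPp : P aPlus = 0)
    (haPlus : 0 < aPlus)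
    (Δ : ℝ) (hΔ : Δ = Real.sqrt D)
    (A₁ A₂ : ℝ → ℝ)
    (hA₁ : ∀ t : ℝ, A₁ t =
      aMinus * (1 - Real.exp (-Δ * t)) / (1 - (aMinus / aPlus) * Real.exp (-Δ * t)))
    (hA₂ : ∀ t : ℝ, A₂ t =
      δ * m * (aMinus * t - (2 / (δ * β ^ 2)) *
        Real.log ((1 - (aMinus / aPlus) * Real.exp (-Δ * t)) / (1 - aMinus / aPlus)))) :
    -- Δ = (δβ²/2)(a₊ − a₋)
    Δ = (δ * β ^ 2 / 2) * (aPlus - aMinus) ∧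
    -- the denominators never vanish on [0,∞)
    (∀ t : ℝ, 0 ≤ t → 0 < 1 - (aMinus / aPlus) * Real.exp (-Δ * t)) ∧
    -- A₁ and A₂ are continuously differentiable on [0,∞)
    ContDiffOn ℝ 1 A₁ (Ici 0) ∧ ContDiffOn ℝ 1 A₂ (Ici 0) ∧
    -- initial conditions
    A₁ 0 = 0 ∧ A₂ 0 = 0 ∧
    -- the Riccati system
    (∀ t : ℝ, 0 ≤ t →
      HasDerivAt A₁ ((δ * β ^ 2 / 2) * (A₁ t) ^ 2 + p * A₁ t + r) t ∧
      HasDerivAt A₂ (δ * m * A₁ t) t) := by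
  have hβ2 : 0 < δ * β ^ 2 := by positivity
  rw [hP] at hPm hPp
  -- Vieta's relations, obtained by dividing differences of `P a₋ = P a₊ = 0` by `a₊ - a₋`.
  have hp : p = -(δ * β ^ 2 / 2) * (aMinus + aPlus) := by
    have h : (aPlus - aMinus) * (p + (δ * β ^ 2 / 2) * (aMinus + aPlus)) = 0 := by
      linear_combination hPp - hPm
    rcases mul_eq_zero.mp h with h | h <;> linarith
  have hr : r = (δ * β ^ 2 / 2) * (aMinus * aPlus) := by
    rw [hp] at hPm
    linear_combination hPm
  have hΔ' : Δ = (δ * β ^ 2 / 2) * (aPlus - aMinus) := by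
    have hsq : D = ((δ * β ^ 2 / 2) * (aPlus - aMinus)) ^ 2 := by
      rw [hD, hp, hr]; ring
    rw [hΔ, hsq, Real.sqrt_sq]
    exact mul_nonneg (by positivity) (by linarith)
  have hΔpos : 0 < Δ := by
    rw [hΔ]; exact Real.sqrt_pos.mpr hDpos
  have hk : aMinus / aPlus < 1 := (div_lt_one haPlus).mpr hroots
  have hk1 : 0 < 1 - aMinus / aPlus := by linarith
  have hden : ∀ t : ℝ, 0 ≤ t → 0 < 1 - (aMinus / aPlus) * Real.exp (-Δ * t) := by
    intro t ht
    have h0 := Real.exp_pos (-Δ * t)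
    have h1 : Real.exp (-Δ * t) ≤ 1 := Real.exp_le_one_iff.mpr (by nlinarith)
    nlinarith [mul_pos hk1 h0]
  have hA₁f := funext hA₁
  have hA₂f := funext hA₂
  refine ⟨hΔ', hden, ?_, ?_, ?_, ?_, ?_⟩
  · rw [hA₁f]
    exact ContDiffOn.div (by fun_prop) (by fun_prop) fun t ht => (hden t ht).ne'
  · rw [hA₂f]
    have hlog : ContDiffOn ℝ 1 (fun t : ℝ => Real.log
        ((1 - (aMinus / aPlus) * Real.exp (-Δ * t)) / (1 - aMinus / aPlus))) (Ici 0) :=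
      ContDiffOn.log (by fun_prop) fun t ht => (div_pos (hden t ht) hk1).ne'
    exact contDiffOn_const.mul ((by fun_prop : ContDiffOn ℝ 1 (fun t : ℝ => aMinus * t) (Ici 0)).sub
      (contDiffOn_const.mul hlog))
  · simp [hA₁]
  · simp [hA₂, div_self hk1.ne']
  · intro t ht
    have hG := hden t ht
    have hE : HasDerivAt (fun s : ℝ => Real.exp (-Δ * s)) (Real.exp (-Δ * t) * -Δ) t := by
      simpa using ((hasDerivAt_id t).const_mul (-Δ)).exp
    have hN := (hE.const_sub 1).const_mul aMinus
    have hGd := (hE.const_mul (aMinus / aPlus)).const_sub 1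
    -- Clearing `a₊` turns the denominator into `a₊ - a₋ e^{-Δt}`.
    have hG' : aPlus - aMinus * Real.exp (-Δ * t) ≠ 0 := by
      have : aPlus - aMinus * Real.exp (-Δ * t)
          = aPlus * (1 - (aMinus / aPlus) * Real.exp (-Δ * t)) := by field_simp
      rw [this]; positivity
    constructor
    · have h := hN.div hGd hG.ne'
      rw [hA₁ t, hA₁f]
      refine h.congr_deriv ?_
      rw [hp, hr]
      generalize Real.exp (-Δ * t) = E at *
      rw [hΔ']
      field_simp
      ring
    · have h := ((((hasDerivAt_id t).const_mul aMinus).sub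
        (((hGd.div_const (1 - aMinus / aPlus)).log (div_pos hG hk1).ne').const_mul
          (2 / (δ * β ^ 2)))).const_mul (δ * m))
      rw [hA₁ t, hA₂f]
      refine h.congr_deriv ?_
      have hk2 : aPlus - aMinus ≠ 0 := by linarith
      generalize Real.exp (-Δ * t) = E at *
      rw [hΔ', div_div_div_cancel_right₀ hk1.ne']
      field_simp
      ring
end
end

section
/- Let γ ∈ (0,∞) with γ ≠ 1 and set Γ := (1−γ)/γ. Define u : [0,∞)×(0,∞) → ℝ by u(t,x) := γ^γ · x^{1−γ}/(1−γ) · e^{−Γ t/2}. Then for all t ≥ 0 and x > 0: ∂_x u(t,x) = γ^γ x^{−γ} e^{−Γt/2} > 0, ∂_{xx} u(t,x) = −γ^{γ+1} x^{−γ−1} e^{−Γt/2} < 0, and u satisfies the fast-diffusion equation ∂_t u(t,x) · ∂_{xx} u(t,x) = (1/2)(∂_x u(t,x))². Moreover, the inverse of the marginal x ↦ ∂_x u(0,x) composed with e^{−x} satisfies (∂_x u(0,·))^{−1}(e^{−x}) = γ e^{x/γ} = (e^{x/γ} − 1)/(1/γ) + γ for all x ∈ ℝ; that is, the Widder representation of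 the power initial datum holds with ν₀ the unit Dirac mass at 1/γ and constant C₀ = γ. -/
/-!
On `x > 0` the power rule gives `u_x` and `u_xx` in closed form; the key point is that the
prefactor `1 / (1 - γ)` cancels in `u_x`, while `u_t = -(Γ / 2) u = -(1 / (2 γ)) γ ^ γ x ^ (1 - γ) e ^ (-Γ t / 2)`.
The equation then reduces to `x ^ (1 - γ) * x ^ (-γ - 1) = (x ^ (-γ)) ^ 2`.
At time `0` the marginal is `γ ^ γ x ^ (-γ)`, strictly decreasing since `-γ < 0`; at
`γ e ^ (x / γ)` the factors `γ ^ γ` and `γ ^ (-γ)` cancel, leaving `e ^ (-x)`.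
-/

open Real MeasureTheory Set

noncomputable section

/-- The first space derivative in closed form. Dividing by `1 - γ` requires `γ ≠ 1`. -/
lemma hasDerivAt_power_utility (γ c E x : ℝ) (hγ : γ ≠ 1) (hx : 0 < x) :
    HasDerivAt (fun y : ℝ => c * y ^ (1 - γ) / (1 - γ) * E) (c * x ^ (-γ) * E) x := by
  have h1 : (1 : ℝ) - γ ≠ 0 := sub_ne_zero.mpr hγ.symm
  have h := (((Real.hasDerivAt_rpow_const (p := 1 - γ) (Or.inl hx.ne')).const_mul c).div_const
    (1 - γ)).mul_const E
  refine h.congr_deriv ?_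
  rw [show (1 : ℝ) - γ - 1 = -γ by ring]
  field_simp

lemma hasDerivAt_power_marginal (γ c E x : ℝ) (hx : 0 < x) :
    HasDerivAt (fun y : ℝ => c * y ^ (-γ) * E) (-(c * γ * x ^ (-γ - 1) * E)) x := by
  have h := ((Real.hasDerivAt_rpow_const (p := -γ) (Or.inl hx.ne')).const_mul c).mul_const E
  exact h.congr_deriv (by ring)

theorem statement17 (γ : ℝ) (hγpos : 0 < γ) (hγne : γ ≠ 1)
    (Γ : ℝ) (hΓ : Γ = (1 - γ) / γ)
    (u : ℝ → ℝ → ℝ)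
    (hu : ∀ t x : ℝ, u t x = γ ^ γ * x ^ (1 - γ) / (1 - γ) * Real.exp (-Γ * t / 2)) :
    -- first marginal derivative and its positivity
    (∀ t x : ℝ, 0 ≤ t → 0 < x →
      deriv (u t) x = γ ^ γ * x ^ (-γ) * Real.exp (-Γ * t / 2) ∧ 0 < deriv (u t) x) ∧
    -- second marginal derivative and its negativity
    (∀ t x : ℝ, 0 ≤ t → 0 < x →
      deriv (deriv (u t)) x = -(γ ^ (γ + 1) * x ^ (-γ - 1) * Real.exp (-Γ * t / 2)) ∧
      deriv (deriv (u t)) x < 0) ∧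
    -- the fast-diffusion equation ∂ₜu · ∂ₓₓu = (1/2)(∂ₓu)²
    (∀ t x : ℝ, 0 ≤ t → 0 < x →
      pdT u t x * deriv (deriv (u t)) x = (1 / 2) * (deriv (u t) x) ^ 2) ∧
    -- the marginal at time 0 is strictly decreasing on (0,∞), hence invertible, and its
    -- inverse composed with e^{-x} is γ e^{x/γ}, which is the Widder representation with
    -- ν₀ the unit Dirac mass at 1/γ and C₀ = γ
    StrictAntiOn (deriv (u 0)) (Ioi 0) ∧
    (∀ x : ℝ,
      0 < γ * Real.exp (x / γ) ∧
      deriv (u 0) (γ * Real.exp (x / γ)) = Real.exp (-x) ∧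
      γ * Real.exp (x / γ) = (Real.exp (x / γ) - 1) / (1 / γ) + γ ∧
      (∫ z, (Real.exp (z * x) - 1) / z ∂(Measure.dirac (1 / γ))) + γ
        = γ * Real.exp (x / γ)) := by
  have hd1 : ∀ t x : ℝ, 0 < x →
      deriv (u t) x = γ ^ γ * x ^ (-γ) * Real.exp (-Γ * t / 2) := by
    intro t x hx
    rw [show u t = _ from funext (hu t)]
    exact (hasDerivAt_power_utility γ _ _ x hγne hx).deriv
  have hd2 : ∀ t x : ℝ, 0 < x →
      deriv (deriv (u t)) x = -(γ ^ (γ + 1) * x ^ (-γ - 1) * Real.exp (-Γ * t / 2)) := by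
    intro t x hx
    -- the closed form of the first derivative holds only on `(0, ∞)`, hence locally near `x`
    have he : deriv (u t) =ᶠ[nhds x] fun y => γ ^ γ * y ^ (-γ) * Real.exp (-Γ * t / 2) := by
      filter_upwards [Ioi_mem_nhds hx] with y hy using hd1 t y hy
    rw [he.deriv_eq, (hasDerivAt_power_marginal γ _ _ x hx).deriv, Real.rpow_add_one hγpos.ne']
  have hc : 0 < γ ^ γ := Real.rpow_pos_of_pos hγpos γ
  refine ⟨fun t x _ hx => ⟨hd1 t x hx, ?_⟩, fun t x _ hx => ⟨hd2 t x hx, ?_⟩,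
    fun t x _ hx => ?_, ?_, fun x => ⟨by positivity, ?_, ?_, ?_⟩⟩
  · rw [hd1 t x hx]
    positivity
  · rw [hd2 t x hx, neg_lt_zero]
    positivity
  · have hT : pdT u t x =
        γ ^ γ * x ^ (1 - γ) / (1 - γ) * (Real.exp (-Γ * t / 2) * (-Γ / 2)) := by
      unfold pdT
      rw [show (fun s => u s x) = _ from funext (fun s => hu s x)]
      have h := (((hasDerivAt_id t).const_mul (-Γ)).div_const 2).exp.const_mul
        (γ ^ γ * x ^ (1 - γ) / (1 - γ))
      rw [mul_one] at h
      exact h.deriv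
    have hpow : x ^ (1 - γ) * x ^ (-γ - 1) = x ^ (-γ) * x ^ (-γ) := by
      rw [← Real.rpow_add hx, ← Real.rpow_add hx]
      ring_nf
    have h1 : (1 : ℝ) - γ ≠ 0 := sub_ne_zero.mpr hγne.symm
    have hcoef : Γ / (1 - γ) * γ = 1 := by
      rw [hΓ]
      field_simp
    rw [hT, hd2 t x hx, hd1 t x hx, Real.rpow_add_one hγpos.ne']
    generalize Real.exp (-Γ * t / 2) = E
    calc _ = (1 / 2) * (γ ^ γ) ^ 2 * E ^ 2 * (Γ / (1 - γ) * γ)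
          * (x ^ (1 - γ) * x ^ (-γ - 1)) := by ring
      _ = _ := by rw [hcoef, hpow]; ring
  · intro a ha b hb hab
    rw [hd1 0 a ha, hd1 0 b hb]
    have := Real.rpow_lt_rpow_of_neg ha hab (neg_lt_zero.mpr hγpos)
    gcongr
  · rw [hd1 0 _ (by positivity), Real.mul_rpow hγpos.le (Real.exp_pos _).le, ← Real.exp_mul,
      ← mul_assoc, ← Real.rpow_add hγpos, add_neg_cancel, Real.rpow_zero,
      show x / γ * -γ = -x by field_simp]
    simp
  · field_simp
    ring
  · rw [integral_dirac, one_div_mul_eq_div]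
    field_simp
    ring
end
end

section
/- Let c : ℝ → (0,∞) be continuously differentiable, and let q, g : [0,∞)×ℝ×ℝ → ℝ be infinitely differentiable functions of (t, ξ, y) satisfying ∂_t q(t,ξ,y) + (c(y)/2) ∂_{ξξ} q(t,ξ,y) = g(t,ξ,y) for all t ≥ 0, ξ ∈ ℝ, y ∈ ℝ. Define q̂(t,ξ,y) := ∂_ξ∂_y q(t,ξ,y) + t (c′(y)/2) ∂_{ξξξ} q(t,ξ,y). Then q̂ satisfies ∂_t q̂(t,ξ,y) + (c(y)/2) ∂_{ξξ} q̂(t,ξ,y) = ∂_ξ∂_y g(t,ξ,y) + t (c′(y)/2) ∂_{ξξξ} g(t,ξ,y) for all t ≥ 0, ξ ∈ ℝ, y ∈ ℝ; in particular, ∂_ξ∂_y q = q̂ − t(c′(y)/2)∂_{ξξξ} q decomposes the mixed derivative of the remainder into a solution of the backward heat equation with transformed source plus an explicit multiple of ∂_{ξξξ} q. -/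
/-!
Write `L = ∂_t + (c(y)/2) ∂_ξξ`. The operator `∂_ξ∂_y` fails to commute with `L` only because `c`
depends on `y`: `[∂_ξ∂_y, L] = (∂_y c / 2) ∂_ξξξ`. The operator `t (∂_y c / 2) ∂_ξξξ` fails to commute with
`L` only because of the factor `t`: `[L, t (∂_y c / 2) ∂_ξξξ] = (∂_y c / 2) ∂_ξξξ`. The two commutators
cancel, so the operator `A = ∂_ξ∂_y + t (∂_y c / 2) ∂_ξξξ` commutes with `L`, and `L q = g` gives
`L (A q) = A g`. Only `ξ`- and `y`-derivatives of the equation are taken, so it is enough that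
the equation holds at each fixed `t ≥ 0`; the coefficient `c` is differentiated once.

The analytic input is that the partial derivatives `pT3`, `pX3`, `pY3` preserve smoothness and
commute with one another; this follows by identifying them with values of the Fréchet derivative
(`hasDerivAt_T_fderiv`, `hasDerivAt_X_fderiv`, `hasDerivAt_Y_fderiv`) and from the symmetry of the
second derivative (`fderiv_apply_comm`).
-/

open Real Set

noncomputable section

/-- Partial derivative in the first variable (time) of a three-argument function. -/
def pT3 (f : ℝ → ℝ → ℝ → ℝ) : ℝ → ℝ → ℝ → ℝ := fun t ξ y => deriv (fun s => f s ξ y) t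

/-- Partial derivative in the second variable (ξ) of a three-argument function. -/
def pX3 (f : ℝ → ℝ → ℝ → ℝ) : ℝ → ℝ → ℝ → ℝ := fun t ξ y => deriv (fun z => f t z y) ξ

/-- Partial derivative in the third variable (slow factor y) of a three-argument function. -/
def pY3 (f : ℝ → ℝ → ℝ → ℝ) : ℝ → ℝ → ℝ → ℝ := fun t ξ y => deriv (fun z => f t ξ z) y

open scoped ContDiff

/-- A three-argument function that is jointly infinitely differentiable. -/
def Smooth3 (f : ℝ → ℝ → ℝ → ℝ) : Prop :=
  ContDiff ℝ ∞ (fun p : ℝ × ℝ × ℝ => f p.1 p.2.1 p.2.2)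

lemma contDiff_fderiv_apply {F : ℝ × ℝ × ℝ → ℝ} (hF : ContDiff ℝ ∞ F) (v : ℝ × ℝ × ℝ) :
    ContDiff ℝ ∞ (fun p => fderiv ℝ F p v) :=
  (hF.fderiv_right (m := ∞) (by simp)).clm_apply contDiff_const

/-- Directional derivatives of a smooth function commute. -/
lemma fderiv_apply_comm {F : ℝ × ℝ × ℝ → ℝ} (hF : ContDiff ℝ ∞ F) (v w p : ℝ × ℝ × ℝ) :
    fderiv ℝ (fun p => fderiv ℝ F p w) p v = fderiv ℝ (fun p => fderiv ℝ F p v) p w := by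
  have hd : DifferentiableAt ℝ (fderiv ℝ F) p :=
    ((hF.fderiv_right (m := ∞) (by simp)).differentiable (by simp)).differentiableAt
  have key : ∀ a b : ℝ × ℝ × ℝ,
      fderiv ℝ (fun p => fderiv ℝ F p a) p b = fderiv ℝ (fderiv ℝ F) p b a := by
    intro a b
    rw [fderiv_clm_apply hd (differentiableAt_const a)]
    simp
  rw [key, key]
  exact (hF.contDiffAt.isSymmSndFDerivAt
    (by simpa using ENat.LEInfty.out)).eq v w

namespace Smooth3

variable {f : ℝ → ℝ → ℝ → ℝ}

lemma hasFDerivAt (hf : Smooth3 f) (p : ℝ × ℝ × ℝ) :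
    HasFDerivAt (fun p : ℝ × ℝ × ℝ => f p.1 p.2.1 p.2.2)
      (fderiv ℝ (fun p : ℝ × ℝ × ℝ => f p.1 p.2.1 p.2.2) p) p :=
  (ContDiff.differentiable hf (by simp) p).hasFDerivAt

lemma hasDerivAt_T_fderiv (hf : Smooth3 f) (t ξ y : ℝ) :
    HasDerivAt (fun s => f s ξ y) (fderiv ℝ (fun p : ℝ × ℝ × ℝ => f p.1 p.2.1 p.2.2)
      (t, ξ, y) (1, 0, 0)) t :=
  HasFDerivAt.comp_hasDerivAt (f := fun s => (s, ξ, y)) t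
    (hf.hasFDerivAt (t, ξ, y))
    ((hasDerivAt_id t).prodMk ((hasDerivAt_const t ξ).prodMk (hasDerivAt_const t y)))

lemma hasDerivAt_X_fderiv (hf : Smooth3 f) (t ξ y : ℝ) :
    HasDerivAt (fun s => f t s y) (fderiv ℝ (fun p : ℝ × ℝ × ℝ => f p.1 p.2.1 p.2.2)
      (t, ξ, y) (0, 1, 0)) ξ :=
  HasFDerivAt.comp_hasDerivAt (f := fun s => (t, s, y)) ξ
    (hf.hasFDerivAt (t, ξ, y))
    ((hasDerivAt_const ξ t).prodMk ((hasDerivAt_id ξ).prodMk (hasDerivAt_const ξ y)))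

lemma hasDerivAt_Y_fderiv (hf : Smooth3 f) (t ξ y : ℝ) :
    HasDerivAt (fun s => f t ξ s) (fderiv ℝ (fun p : ℝ × ℝ × ℝ => f p.1 p.2.1 p.2.2)
      (t, ξ, y) (0, 0, 1)) y :=
  HasFDerivAt.comp_hasDerivAt (f := fun s => (t, ξ, s)) y
    (hf.hasFDerivAt (t, ξ, y))
    ((hasDerivAt_const y t).prodMk ((hasDerivAt_const y ξ).prodMk (hasDerivAt_id y)))

lemma hasDerivAt_T (hf : Smooth3 f) (t ξ y : ℝ) :
    HasDerivAt (fun s => f s ξ y) (pT3 f t ξ y) t :=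
  (hf.hasDerivAt_T_fderiv t ξ y).differentiableAt.hasDerivAt

lemma hasDerivAt_X (hf : Smooth3 f) (t ξ y : ℝ) :
    HasDerivAt (fun s => f t s y) (pX3 f t ξ y) ξ :=
  (hf.hasDerivAt_X_fderiv t ξ y).differentiableAt.hasDerivAt

lemma hasDerivAt_Y (hf : Smooth3 f) (t ξ y : ℝ) :
    HasDerivAt (fun s => f t ξ s) (pY3 f t ξ y) y :=
  (hf.hasDerivAt_Y_fderiv t ξ y).differentiableAt.hasDerivAt

lemma uncurry_T (hf : Smooth3 f) : (fun p : ℝ × ℝ × ℝ => pT3 f p.1 p.2.1 p.2.2) =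
    fun p => fderiv ℝ (fun p : ℝ × ℝ × ℝ => f p.1 p.2.1 p.2.2) p (1, 0, 0) :=
  funext fun p => (hf.hasDerivAt_T_fderiv p.1 p.2.1 p.2.2).deriv

lemma uncurry_X (hf : Smooth3 f) : (fun p : ℝ × ℝ × ℝ => pX3 f p.1 p.2.1 p.2.2) =
    fun p => fderiv ℝ (fun p : ℝ × ℝ × ℝ => f p.1 p.2.1 p.2.2) p (0, 1, 0) :=
  funext fun p => (hf.hasDerivAt_X_fderiv p.1 p.2.1 p.2.2).deriv

lemma uncurry_Y (hf : Smooth3 f) : (fun p : ℝ × ℝ × ℝ => pY3 f p.1 p.2.1 p.2.2) =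
    fun p => fderiv ℝ (fun p : ℝ × ℝ × ℝ => f p.1 p.2.1 p.2.2) p (0, 0, 1) :=
  funext fun p => (hf.hasDerivAt_Y_fderiv p.1 p.2.1 p.2.2).deriv

lemma pT (hf : Smooth3 f) : Smooth3 (pT3 f) := by
  unfold Smooth3
  rw [hf.uncurry_T]
  exact contDiff_fderiv_apply hf _

lemma pX (hf : Smooth3 f) : Smooth3 (pX3 f) := by
  unfold Smooth3
  rw [hf.uncurry_X]
  exact contDiff_fderiv_apply hf _

lemma pY (hf : Smooth3 f) : Smooth3 (pY3 f) := by
  unfold Smooth3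
  rw [hf.uncurry_Y]
  exact contDiff_fderiv_apply hf _

lemma comm_TX (hf : Smooth3 f) : pT3 (pX3 f) = pX3 (pT3 f) := by
  funext t ξ y
  refine (hf.pX.hasDerivAt_T_fderiv t ξ y).deriv.trans (Eq.trans ?_ (hf.pT.hasDerivAt_X_fderiv t ξ y).deriv.symm)
  rw [hf.uncurry_X, hf.uncurry_T]
  exact fderiv_apply_comm hf _ _ _

lemma comm_TY (hf : Smooth3 f) : pT3 (pY3 f) = pY3 (pT3 f) := by
  funext t ξ y
  refine (hf.pY.hasDerivAt_T_fderiv t ξ y).deriv.trans (Eq.trans ?_ (hf.pT.hasDerivAt_Y_fderiv t ξ y).deriv.symm)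
  rw [hf.uncurry_Y, hf.uncurry_T]
  exact fderiv_apply_comm hf _ _ _

lemma comm_XY (hf : Smooth3 f) : pX3 (pY3 f) = pY3 (pX3 f) := by
  funext t ξ y
  refine (hf.pY.hasDerivAt_X_fderiv t ξ y).deriv.trans (Eq.trans ?_ (hf.pX.hasDerivAt_Y_fderiv t ξ y).deriv.symm)
  rw [hf.uncurry_Y, hf.uncurry_X]
  exact fderiv_apply_comm hf _ _ _

end Smooth3

theorem statement19 (c : ℝ → ℝ) (hcpos : ∀ y : ℝ, 0 < c y) (hc : ContDiff ℝ 1 c)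
    (q g : ℝ → ℝ → ℝ → ℝ)
    (hq : ContDiff ℝ (⊤ : ℕ∞) (fun p : ℝ × ℝ × ℝ => q p.1 p.2.1 p.2.2))
    (hg : ContDiff ℝ (⊤ : ℕ∞) (fun p : ℝ × ℝ × ℝ => g p.1 p.2.1 p.2.2))
    (hpde : ∀ t ξ y : ℝ, 0 ≤ t →
      pT3 q t ξ y + (c y / 2) * pX3 (pX3 q) t ξ y = g t ξ y)
    (qhat : ℝ → ℝ → ℝ → ℝ)
    (hqhat : ∀ t ξ y : ℝ, qhat t ξ y =
      pX3 (pY3 q) t ξ y + t * (deriv c y / 2) * pX3 (pX3 (pX3 q)) t ξ y) :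
    -- q̂ solves the backward heat equation with the transformed source
    (∀ t ξ y : ℝ, 0 ≤ t →
      pT3 qhat t ξ y + (c y / 2) * pX3 (pX3 qhat) t ξ y
        = pX3 (pY3 g) t ξ y + t * (deriv c y / 2) * pX3 (pX3 (pX3 g)) t ξ y) ∧
    -- in particular, the decomposition of the mixed derivative
    (∀ t ξ y : ℝ, 0 ≤ t →
      pX3 (pY3 q) t ξ y = qhat t ξ y - t * (deriv c y / 2) * pX3 (pX3 (pX3 q)) t ξ y) := by
  replace hq : Smooth3 q := hq
  replace hg : Smooth3 g := hg
  obtain rfl : qhat = fun t ξ y =>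
      pX3 (pY3 q) t ξ y + t * (deriv c y / 2) * pX3 (pX3 (pX3 q)) t ξ y := by
    funext t ξ y
    exact hqhat t ξ y
  refine ⟨fun t ξ y ht => ?_, fun t ξ y _ => by ring⟩
  -- the `ξ`-derivatives of the equation at the fixed time `t`
  have g1 : ∀ ξ, pX3 g t ξ y = pX3 (pT3 q) t ξ y + c y / 2 * pX3 (pX3 (pX3 q)) t ξ y := by
    intro ξ
    have h := (hq.pT.hasDerivAt_X t ξ y).add ((hq.pX.pX.hasDerivAt_X t ξ y).const_mul (c y / 2))
    refine Eq.trans ?_ h.deriv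
    exact congrArg (fun F : ℝ → ℝ => deriv F ξ) (funext fun z => (hpde t z y ht).symm)
  have g2 : ∀ ξ, pX3 (pX3 g) t ξ y
      = pX3 (pX3 (pT3 q)) t ξ y + c y / 2 * pX3 (pX3 (pX3 (pX3 q))) t ξ y := by
    intro ξ
    have h := (hq.pT.pX.hasDerivAt_X t ξ y).add
      ((hq.pX.pX.pX.hasDerivAt_X t ξ y).const_mul (c y / 2))
    refine Eq.trans ?_ h.deriv
    exact congrArg (fun F : ℝ → ℝ => deriv F ξ) (funext g1)
  have g3 : pX3 (pX3 (pX3 g)) t ξ y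
      = pX3 (pX3 (pX3 (pT3 q))) t ξ y + c y / 2 * pX3 (pX3 (pX3 (pX3 (pX3 q)))) t ξ y := by
    have h := (hq.pT.pX.pX.hasDerivAt_X t ξ y).add
      ((hq.pX.pX.pX.pX.hasDerivAt_X t ξ y).const_mul (c y / 2))
    refine Eq.trans ?_ h.deriv
    exact congrArg (fun F : ℝ → ℝ => deriv F ξ) (funext g2)
  have hcd : HasDerivAt c (deriv c y) y := (hc.differentiable (by simp) y).hasDerivAt
  -- the `y`-derivative also falls on `c`, which produces the term with `∂_y c`
  have gy : ∀ ξ, pY3 g t ξ y = pY3 (pT3 q) t ξ y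
      + (deriv c y / 2 * pX3 (pX3 q) t ξ y + c y / 2 * pY3 (pX3 (pX3 q)) t ξ y) := by
    intro ξ
    have h := (hq.pT.hasDerivAt_Y t ξ y).add ((hcd.div_const 2).mul (hq.pX.pX.hasDerivAt_Y t ξ y))
    refine Eq.trans ?_ h.deriv
    exact congrArg (fun F : ℝ → ℝ => deriv F y) (funext fun z => (hpde t ξ z ht).symm)
  have gxy : pX3 (pY3 g) t ξ y = pX3 (pY3 (pT3 q)) t ξ y
      + (deriv c y / 2 * pX3 (pX3 (pX3 q)) t ξ y
        + c y / 2 * pX3 (pY3 (pX3 (pX3 q))) t ξ y) := by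
    have h := (hq.pT.pY.hasDerivAt_X t ξ y).add
      (((hq.pX.pX.hasDerivAt_X t ξ y).const_mul (deriv c y / 2)).add
        ((hq.pX.pX.pY.hasDerivAt_X t ξ y).const_mul (c y / 2)))
    refine Eq.trans ?_ h.deriv
    exact congrArg (fun F : ℝ → ℝ => deriv F ξ) (funext gy)
  -- the derivatives of `q̂`
  have eT : pT3 (fun t ξ y =>
      pX3 (pY3 q) t ξ y + t * (deriv c y / 2) * pX3 (pX3 (pX3 q)) t ξ y) t ξ y
      = pT3 (pX3 (pY3 q)) t ξ y + (1 * (deriv c y / 2) * pX3 (pX3 (pX3 q)) t ξ y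
        + t * (deriv c y / 2) * pT3 (pX3 (pX3 (pX3 q))) t ξ y) :=
    ((hq.pY.pX.hasDerivAt_T t ξ y).add
      (((hasDerivAt_id t).mul_const (deriv c y / 2)).mul
        (hq.pX.pX.pX.hasDerivAt_T t ξ y))).deriv
  have eX : ∀ ξ, pX3 (fun t ξ y =>
      pX3 (pY3 q) t ξ y + t * (deriv c y / 2) * pX3 (pX3 (pX3 q)) t ξ y) t ξ y
      = pX3 (pX3 (pY3 q)) t ξ y + t * (deriv c y / 2) * pX3 (pX3 (pX3 (pX3 q))) t ξ y :=
    fun ξ => ((hq.pY.pX.hasDerivAt_X t ξ y).add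
      ((hq.pX.pX.pX.hasDerivAt_X t ξ y).const_mul (t * (deriv c y / 2)))).deriv
  have eXX : pX3 (pX3 (fun t ξ y =>
      pX3 (pY3 q) t ξ y + t * (deriv c y / 2) * pX3 (pX3 (pX3 q)) t ξ y)) t ξ y
      = pX3 (pX3 (pX3 (pY3 q))) t ξ y
        + t * (deriv c y / 2) * pX3 (pX3 (pX3 (pX3 (pX3 q)))) t ξ y := by
    have h := (hq.pY.pX.pX.hasDerivAt_X t ξ y).add
      ((hq.pX.pX.pX.pX.hasDerivAt_X t ξ y).const_mul (t * (deriv c y / 2)))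
    refine Eq.trans ?_ h.deriv
    exact congrArg (fun F : ℝ → ℝ => deriv F ξ) (funext eX)
  -- all mixed derivatives in the order `∂_ξ … ∂_ξ ∂_y ∂_t`, so that the terms can be compared
  rw [hq.pY.comm_TX, hq.comm_TY, hq.pX.pX.comm_TX, hq.pX.comm_TX, hq.comm_TX] at eT
  rw [← hq.pX.comm_XY, ← hq.comm_XY] at gxy
  rw [eT, eXX, gxy, g3]
  ring
end
end
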